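/- For every integer k ≥ 3 and real T ≥ 2, the tail of the logarithmic singular integral satisfies ∫_{|β| > T} |𝔍₂(β)| dβ ≪ (log T) · T^{−3/2 − 1/k}, where 𝔍₂(β) = (∫_0^1 e(βμ²) dμ)³ (∫_0^1 e(βμ^k) dμ) (∫_0^3 e(−βμ) log μ dμ), with implied constant depending only on k. -/

import Mathlib

/-!
The tail bound follows from a pointwise bound for `J₂` together with integration of a power.

Each oscillatory factor is estimated by cutting off a short interval at `0`, bounded trivially, and
integrating by parts on the rest with a monotone weight (`norm_integral_mul_deriv_le`). This gives
`|∫₀¹ e(β μ^n) dμ| ≤ 2 |β|^(-1/n)` (`norm_integral_e_pow_le`) and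
`|∫₀³ e(-β μ) log μ dμ| ≤ 6 log |β| / |β|` (`norm_integral_e_log_le`), hence
`|J₂(β)| ≪ log |β| · |β|^(-5/2 - 1/k)`. For `|β| > T` one has
`log |β| ≤ 5 (log T) (|β| / T)^(1/2)`, so `|J₂(β)| ≪ (log T) T^(-1/2) |β|^(-2 - 1/k)`
(`norm_J₂_le`), and the integral of the last power over the tail is `≪ T^(-1 - 1/k)`.
-/

noncomputable def e (t : ℝ) : ℂ := Complex.exp (2 * Real.pi * Complex.I * t)

noncomputable def J₂ (k : ℕ) (β : ℝ) : ℂ :=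
  (∫ μ in (0:ℝ)..1, e (β * μ ^ 2)) ^ 3 *
    (∫ μ in (0:ℝ)..1, e (β * μ ^ k)) *
    (∫ μ in (0:ℝ)..3, e (-(β * μ)) * (Real.log μ : ℂ))

open intervalIntegral

theorem norm_e (t : ℝ) : ‖e t‖ = 1 := by
  rw [e, Complex.norm_exp]
  simp

theorem continuous_e : Continuous e := by
  unfold e; fun_prop

theorem hasDerivAt_e (t : ℝ) : HasDerivAt e (2 * Real.pi * Complex.I * e t) t := by
  have h : HasDerivAt (fun z : ℝ => 2 * Real.pi * Complex.I * (z : ℂ))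
      (2 * Real.pi * Complex.I * 1) t :=
    (Complex.ofRealCLM.hasDerivAt (x := t)).const_mul (2 * Real.pi * Complex.I : ℂ)
  have := h.cexp
  exact this.congr_deriv (by rw [mul_one, e, mul_comm])

/-- First derivative test: a unimodular `v` integrated against its own derivative with a monotone
weight `u`. Monotonicity makes the total variation of `u` equal to `u b - u a`, so the integral
left over after integrating by parts is no larger than the boundary terms. -/
theorem norm_integral_mul_deriv_le {u u' : ℝ → ℝ} {v v' : ℝ → ℂ} {a b : ℝ} (hab : a ≤ b)
    (hu : ∀ x ∈ Set.Icc a b, HasDerivAt u (u' x) x)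
    (hv : ∀ x ∈ Set.Icc a b, HasDerivAt v (v' x) x)
    (hu'c : ContinuousOn u' (Set.Icc a b)) (hv'c : ContinuousOn v' (Set.Icc a b))
    (hpos : ∀ x ∈ Set.Icc a b, 0 ≤ u' x) (hv1 : ∀ x, ‖v x‖ = 1) :
    ‖∫ x in a..b, (u x : ℂ) * v' x‖ ≤ 2 * (|u a| + |u b|) := by
  rw [← Set.uIcc_of_le hab] at hu hv hu'c hv'c
  have hI : IntervalIntegrable u' MeasureTheory.volume a b := hu'c.intervalIntegrable
  have hI' : IntervalIntegrable (fun x => (u' x : ℂ)) MeasureTheory.volume a b :=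
    (Complex.continuous_ofReal.comp_continuousOn hu'c).intervalIntegrable
  rw [integral_mul_deriv_eq_deriv_mul (u := fun x => (u x : ℂ)) (u' := fun x => (u' x : ℂ))
    (fun x hx => (hu x hx).ofReal_comp) hv hI' hv'c.intervalIntegrable]
  have h3 : ‖∫ x in a..b, (u' x : ℂ) * v x‖ ≤ u b - u a := by
    rw [← integral_eq_sub_of_hasDerivAt hu hI]
    refine norm_integral_le_of_norm_le hab (Filter.Eventually.of_forall fun x hx => ?_) hI
    rw [norm_mul, hv1, mul_one, Complex.norm_real, Real.norm_eq_abs,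
      abs_of_nonneg (hpos x (Set.Ioc_subset_Icc_self hx))]
  calc _ ≤ ‖(u b : ℂ) * v b‖ + ‖(u a : ℂ) * v a‖ + ‖∫ x in a..b, (u' x : ℂ) * v x‖ :=
        (norm_sub_le _ _).trans (add_le_add_left (norm_sub_le _ _) _)
    _ ≤ |u b| + |u a| + (u b - u a) := by
        simp only [norm_mul, hv1, mul_one, Complex.norm_real, Real.norm_eq_abs]
        linarith
    _ ≤ _ := by linarith [le_abs_self (u b), neg_abs_le (u a)]

/-- The decay `|β| ^ (-1/n)`: the interval `[0, δ]` with `δ = |β| ^ (-1/n)` contributes at most its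
length, and on `[δ, 1]` the phase derivative `2π β n μ ^ (n-1)` is at least of size `δ⁻¹`. -/
theorem norm_integral_e_pow_le (n : ℕ) (hn : 1 ≤ n) (β : ℝ) (hβ : 1 ≤ |β|) :
    ‖∫ μ in (0:ℝ)..1, e (β * μ ^ n)‖ ≤ 2 * |β| ^ (-(1 / n : ℝ)) := by
  obtain ⟨m, rfl⟩ : ∃ m, n = m + 1 := ⟨n - 1, by omega⟩
  have hβ0 : 0 < |β| := by linarith
  set δ : ℝ := |β| ^ (-(1 / (m + 1 : ℕ) : ℝ)) with hδ
  have hδ0 : 0 < δ := Real.rpow_pos_of_pos hβ0 _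
  have hδ1 : δ ≤ 1 := Real.rpow_le_one_of_one_le_of_nonpos hβ (by
    rw [neg_nonpos]; positivity)
  have hδn : |β| * δ ^ (m + 1) = 1 := by
    rw [hδ, ← Real.rpow_natCast, ← Real.rpow_mul hβ0.le]
    rw [show -(1 / ((m + 1 : ℕ) : ℝ)) * ((m + 1 : ℕ) : ℝ) = -1 by
      field_simp, Real.rpow_neg_one, mul_inv_cancel₀ hβ0.ne']
  have hc : Continuous fun μ : ℝ => e (β * μ ^ (m + 1)) := continuous_e.comp (by fun_prop)
  have h1 : ‖∫ μ in (0:ℝ)..δ, e (β * μ ^ (m + 1))‖ ≤ δ := by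
    simpa [abs_of_pos hδ0] using norm_integral_le_of_norm_le_const (a := 0) (b := δ) (C := 1)
      (f := fun μ => e (β * μ ^ (m + 1))) (fun x _ => (norm_e _).le)
  -- The weight is the reciprocal of the phase derivative up to a constant; the sign makes it
  -- increasing.
  have h2 := norm_integral_mul_deriv_le (u := fun x => -(x ^ m)⁻¹)
    (u' := fun x => m * x ^ (m - 1) / (x ^ m) ^ 2)
    (v := fun x => e (β * x ^ (m + 1)))
    (v' := fun x => (β * ((m + 1 : ℕ) * x ^ m) : ℝ) • 
      (2 * Real.pi * Complex.I * e (β * x ^ (m + 1)))) hδ1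
    (fun x hx => by
      have hx0 : 0 < x := hδ0.trans_le hx.1
      exact ((hasDerivAt_pow m x).inv (pow_pos hx0 m).ne').neg.congr_deriv (by ring))
    (fun x hx => (hasDerivAt_e _).scomp x ((hasDerivAt_pow (m + 1) x).const_mul β))
    (ContinuousOn.div (by fun_prop) (by fun_prop) fun x hx => by
      have hx0 : 0 < x := hδ0.trans_le hx.1
      positivity)
    (by
      apply Continuous.continuousOn
      have := hc
      fun_prop)
    (fun x hx => by
      have hx0 : 0 < x := hδ0.trans_le hx.1
      positivity)
    (fun x => norm_e _)
  have h3 : ∫ x in δ..1, ((-(x ^ m)⁻¹ : ℝ) : ℂ) * ((β * ((m + 1 : ℕ) * x ^ m) : ℝ) • 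
      (2 * Real.pi * Complex.I * e (β * x ^ (m + 1)))) =
      ∫ x in δ..1, (-(2 * Real.pi * Complex.I * β * (m + 1 : ℕ))) * e (β * x ^ (m + 1)) := by
    refine integral_congr fun x hx => ?_
    rw [Set.uIcc_of_le hδ1] at hx
    have hx0 : (x : ℂ) ≠ 0 := by exact_mod_cast (hδ0.trans_le hx.1).ne'
    simp only [Complex.real_smul]
    push_cast
    field_simp
  rw [h3, integral_const_mul, norm_mul] at h2
  have h4 : ‖-(2 * Real.pi * Complex.I * β * (m + 1 : ℕ) : ℂ)‖ = 2 * Real.pi * |β| * (m + 1) := by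
    rw [norm_neg]
    simp only [norm_mul, Complex.norm_I, Complex.norm_real, Complex.norm_natCast, Real.norm_eq_abs,
      abs_of_pos Real.pi_pos]
    simp
  rw [h4] at h2
  have h5 : |(-((δ:ℝ) ^ m)⁻¹)| = |β| * δ := by
    rw [abs_neg, abs_of_pos (by positivity)]
    have : δ ^ m ≠ 0 := by positivity
    field_simp
    rw [← hδn]; ring
  have h6 : |(-((1:ℝ) ^ m)⁻¹)| ≤ |β| * δ := by
    rw [one_pow, inv_one, abs_neg, abs_one, ← hδn]
    gcongr
    exact pow_le_of_le_one hδ0.le hδ1 (by omega)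
  rw [h5] at h2
  set N := ‖∫ x in δ..1, e (β * x ^ (m + 1))‖ with hN
  have hN0 : 0 ≤ N := norm_nonneg _
  have h7 : 6 * (|β| * N) ≤ 4 * (|β| * δ) := by
    calc 6 * (|β| * N) ≤ 2 * Real.pi * |β| * (m + 1) * N := by
          have : 6 ≤ 2 * Real.pi * (m + 1) := by
            nlinarith [Real.pi_gt_three, (Nat.cast_nonneg m : (0:ℝ) ≤ m)]
          nlinarith [mul_nonneg hβ0.le hN0]
      _ ≤ _ := h2
      _ ≤ _ := by linarith
  have h8 : N ≤ δ := by nlinarith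
  rw [← integral_add_adjacent_intervals (hc.intervalIntegrable 0 δ) (hc.intervalIntegrable δ 1)]
  linarith [norm_add_le (∫ μ in (0:ℝ)..δ, e (β * μ ^ (m + 1))) (∫ μ in δ..1, e (β * μ ^ (m + 1)))]

/-- Splitting at `1 / |β|`: the part near the logarithmic singularity is bounded by `∫ |log μ|`,
the rest by partial integration with the increasing weight `log`. -/
theorem norm_integral_e_log_le (β : ℝ) (hβ : 2 ≤ |β|) :
    ‖∫ μ in (0:ℝ)..3, e (-(β * μ)) * (Real.log μ : ℂ)‖ ≤ 6 * (Real.log |β| / |β|) := by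
  have hβ0 : 0 < |β| := by linarith
  set δ : ℝ := |β|⁻¹ with hδ
  have hδ0 : 0 < δ := by positivity
  have hδ1 : δ ≤ 1 := inv_le_one_of_one_le₀ (by linarith)
  have hc : Continuous fun μ : ℝ => e (-(β * μ)) := continuous_e.comp (by fun_prop)
  have hi : ∀ a b : ℝ, IntervalIntegrable (fun μ : ℝ => e (-(β * μ)) * (Real.log μ : ℂ))
      MeasureTheory.volume a b := fun a b =>
    IntervalIntegrable.continuousOn_mul (f := fun μ : ℝ => (Real.log μ : ℂ))
      ⟨MeasureTheory.Integrable.ofReal intervalIntegrable_log'.1,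
        MeasureTheory.Integrable.ofReal intervalIntegrable_log'.2⟩ hc.continuousOn
  have hlog : Real.log 2 ≤ Real.log |β| := Real.log_le_log (by norm_num) hβ
  have hl2 := Real.log_two_gt_d9
  have hl3 : Real.log 3 ≤ 2 * Real.log |β| := by
    calc Real.log 3 ≤ Real.log (2 ^ 2) := Real.log_le_log (by norm_num) (by norm_num)
      _ = 2 * Real.log 2 := by rw [Real.log_pow]; norm_num
      _ ≤ _ := by linarith
  have h1 : ‖∫ μ in (0:ℝ)..δ, e (-(β * μ)) * (Real.log μ : ℂ)‖ ≤ δ * (1 + Real.log |β|) := by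
    have : ∫ μ in (0:ℝ)..δ, -Real.log μ = δ * (1 + Real.log |β|) := by
      rw [integral_neg, integral_log]
      simp [hδ]; ring
    rw [← this]
    refine norm_integral_le_of_norm_le hδ0.le (Filter.Eventually.of_forall fun x hx => ?_)
      intervalIntegrable_log'.neg
    rw [norm_mul, norm_e, one_mul, Complex.norm_real, Real.norm_eq_abs,
      abs_of_nonpos (Real.log_nonpos hx.1.le (hx.2.trans hδ1))]
  have h2 := norm_integral_mul_deriv_le (u := Real.log)
    (u' := fun x => x⁻¹)
    (v := fun x => e (-(β * x)))
    (v' := fun x => (-(β * 1) : ℝ) • (2 * Real.pi * Complex.I * e (-(β * x)))) 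
    (show δ ≤ 3 by linarith)
    (fun x hx => Real.hasDerivAt_log (hδ0.trans_le hx.1).ne')
    (fun x hx => (hasDerivAt_e _).scomp x ((hasDerivAt_id x).const_mul β).neg)
    (ContinuousOn.inv₀ (by fun_prop) fun x hx => (hδ0.trans_le hx.1).ne')
    (by
      apply Continuous.continuousOn
      fun_prop)
    (fun x hx => by
      have hx0 : 0 < x := hδ0.trans_le hx.1
      positivity)
    (fun x => norm_e _)
  have h3 : ∫ x in δ..3, (Real.log x : ℂ) * ((-(β * 1) : ℝ) •
        (2 * Real.pi * Complex.I * e (-(β * x)))) =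
      ∫ x in δ..3, (-(2 * Real.pi * Complex.I * β)) * (e (-(β * x)) * (Real.log x : ℂ)) := by
    refine integral_congr fun x hx => ?_
    simp only [Complex.real_smul]
    push_cast
    ring
  rw [h3, integral_const_mul, norm_mul] at h2
  have h4 : ‖-(2 * Real.pi * Complex.I * β : ℂ)‖ = 2 * Real.pi * |β| := by
    rw [norm_neg]
    simp only [norm_mul, Complex.norm_I, Complex.norm_real, Real.norm_eq_abs,
      abs_of_pos Real.pi_pos]
    simp
  rw [h4, hδ, Real.log_inv, abs_neg, abs_of_nonneg (by linarith : 0 ≤ Real.log |β|),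
    abs_of_nonneg (Real.log_nonneg (by norm_num : (1:ℝ) ≤ 3)), ← hδ] at h2
  set N := ‖∫ x in δ..3, e (-(β * x)) * (Real.log x : ℂ)‖ with hN
  have hN0 : 0 ≤ N := norm_nonneg _
  have h7 : |β| * N ≤ Real.log |β| := by
    nlinarith [Real.pi_gt_three, mul_nonneg hβ0.le hN0]
  have h8 : N ≤ Real.log |β| / |β| := by
    rw [le_div_iff₀ hβ0]; linarith
  have h9 : δ * (1 + Real.log |β|) ≤ 3 * (Real.log |β| / |β|) := by
    rw [div_eq_mul_inv, ← hδ]; nlinarith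
  rw [← integral_add_adjacent_intervals (hi 0 δ) (hi δ 3)]
  have h10 : 0 ≤ Real.log |β| / |β| := by apply div_nonneg <;> linarith
  linarith [norm_add_le (∫ μ in (0:ℝ)..δ, e (-(β * μ)) * (Real.log μ : ℂ))
    (∫ μ in δ..3, e (-(β * μ)) * (Real.log μ : ℂ))]

/-- Pointwise bound for `|β| = b > T`. The factor `log b` is replaced by
`5 (log T) (b / T) ^ (1/2)`, which leaves a pure power of `b` to integrate over the tail. -/
theorem norm_J₂_le (k : ℕ) (hk : 3 ≤ k) (T b : ℝ) (hT : 2 ≤ T) (hb : T < b) (β : ℝ) (hβ : |β| = b) :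
    ‖J₂ k β‖ ≤ 480 * Real.log T * T ^ (-(1 / 2 : ℝ)) * b ^ (-2 - 1 / (k : ℝ)) := by
  have hb0 : 0 < b := by linarith
  have hT0 : 0 < T := by linarith
  have hA := norm_integral_e_pow_le 2 (by norm_num) β (by linarith)
  have hB := norm_integral_e_pow_le k (by omega) β (by linarith)
  have hL := norm_integral_e_log_le β (by linarith)
  rw [hβ] at hA hB hL
  have hlog : Real.log b ≤ 5 * Real.log T * (b / T) ^ (1 / 2 : ℝ) := by
    have h1 : Real.log b = Real.log T + Real.log (b / T) := by
      rw [Real.log_div hb0.ne' hT0.ne']; ring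
    have h2 := Real.log_le_rpow_div (x := b / T) (by positivity) (show (0:ℝ) < 1 / 2 by norm_num)
    have h3 : 1 ≤ (b / T) ^ (1 / 2 : ℝ) :=
      Real.one_le_rpow (by rw [le_div_iff₀ hT0]; linarith) (by norm_num)
    have h4 := Real.log_le_log (by norm_num) hT
    have h5 := Real.log_two_gt_d9
    rw [h1]
    nlinarith
  calc ‖J₂ k β‖ ≤ (2 * b ^ (-(1 / (2 : ℕ) : ℝ))) ^ 3 * (2 * b ^ (-(1 / k : ℝ))) *
        (6 * (Real.log b / b)) := by
        rw [J₂, norm_mul, norm_mul, norm_pow]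
        gcongr
    _ ≤ (2 * b ^ (-(1 / (2 : ℕ) : ℝ))) ^ 3 * (2 * b ^ (-(1 / k : ℝ))) *
        (6 * (5 * Real.log T * (b / T) ^ (1 / 2 : ℝ) / b)) := by
        gcongr
    _ = 480 * Real.log T * T ^ (-(1 / 2 : ℝ)) *
        (b ^ (-(1 / 2) * 3 : ℝ) * b ^ (-(1 / k : ℝ)) * b ^ (1 / 2 : ℝ) * b ^ (-1 : ℝ)) := by
        rw [Real.div_rpow hb0.le hT0.le, Real.rpow_neg hT0.le, Real.rpow_neg_one,
          Real.rpow_mul hb0.le, mul_pow]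
        norm_num
        ring
    _ = _ := by
        rw [← Real.rpow_add hb0, ← Real.rpow_add hb0, ← Real.rpow_add hb0]
        congr 2
        ring

open MeasureTheory in
theorem singular_integral_log_tail (k : ℕ) (hk : 3 ≤ k) :
    ∃ C : ℝ, 0 < C ∧ ∀ T : ℝ, 2 ≤ T →
      (∫ β in {b : ℝ | T < |b|}, ‖J₂ k β‖) ≤
        C * Real.log T * T ^ (-(3 : ℝ) / 2 - 1 / k) := by
  refine ⟨960, by norm_num, fun T hT => ?_⟩
  have hT0 : 0 < T := by linarith
  have hk0 : (0:ℝ) < 1 / k := by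
    have : (0:ℝ) < k := by exact_mod_cast (by omega : 0 < k)
    positivity
  have hlT : 0 ≤ Real.log T := Real.log_nonneg (by linarith)
  set K := 480 * Real.log T * T ^ (-(1 / 2 : ℝ)) with hK
  have hK0 : 0 ≤ K := by positivity
  set s : ℝ := -2 - 1 / (k : ℝ) with hs
  set g : ℝ → ℝ := (Set.Ioi T).indicator fun b => K * b ^ s with hg
  have hS : MeasurableSet {b : ℝ | T < |b|} := measurableSet_lt measurable_const measurable_norm
  have hgi : Integrable g :=
    (integrable_indicator_iff measurableSet_Ioi).2
      ((integrableOn_Ioi_rpow_of_lt (show s < -1 by linarith) hT0).const_mul K)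
  have hg0 : ∀ x, 0 ≤ g x := fun x => Set.indicator_nonneg (fun y hy => by
    have : 0 < y := hT0.trans hy
    positivity) x
  -- At most one of `β`, `-β` exceeds `T > 0`, so `g |β| = g β + g (-β)`.
  have hgi' : Integrable fun β : ℝ => g |β| := by
    refine (hgi.add hgi.comp_neg).congr (Filter.Eventually.of_forall fun x => ?_)
    simp only [Pi.add_apply, hg, Set.indicator, Set.mem_Ioi]
    rcases le_total 0 x with h | h
    · rw [abs_of_nonneg h, if_neg (by linarith : ¬ T < -x), add_zero]
    · rw [abs_of_nonpos h, if_neg (by linarith : ¬ T < x), zero_add]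
  calc (∫ β in {b : ℝ | T < |b|}, ‖J₂ k β‖) ≤ ∫ β in {b : ℝ | T < |b|}, g |β| := by
        refine integral_mono_of_nonneg (Filter.Eventually.of_forall fun _ => norm_nonneg _)
          hgi'.integrableOn ?_
        filter_upwards [ae_restrict_mem hS] with β hβ
        rw [hg, Set.indicator_of_mem (show |β| ∈ Set.Ioi T from hβ)]
        exact norm_J₂_le k hk T |β| hT hβ β rfl
    _ ≤ ∫ β, g |β| := setIntegral_le_integral hgi' (Filter.Eventually.of_forall fun _ => hg0 _)
    _ = 2 * ∫ β in Set.Ioi T, K * β ^ s := by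
        rw [integral_comp_abs, setIntegral_indicator measurableSet_Ioi, Set.Ioi_inter_Ioi,
          max_eq_right hT0.le]
    _ = 2 * K * (T ^ (s + 1) / (-(s + 1))) := by
        rw [MeasureTheory.integral_const_mul, integral_Ioi_rpow_of_lt (by linarith) hT0, div_neg, neg_div]
        ring
    _ ≤ 2 * K * T ^ (s + 1) := by
        gcongr
        exact div_le_self (by positivity) (by linarith)
    _ = 960 * Real.log T * (T ^ (-(1 / 2 : ℝ)) * T ^ (s + 1)) := by rw [hK]; ring
    _ = _ := by
        rw [← Real.rpow_add hT0]
        congr 2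
        rw [hs]; ring
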